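/- For all i, j, h ∈ {0,1,…,d} with i ≠ j: the matrix E_i* A_j E_h* is nonzero if and only if h = max{i, j}. -/

import Mathlib

open Finset Matrix

/-- Vertex set of the wreath product `K_{n 0} ≀ K_{n 1} ≀ ⋯ ≀ K_{n (d-1)}`
(paper indices `n_1, …, n_d` correspond to `n 0, …, n (d-1)`). -/
abbrev Vx (d : ℕ) (n : ℕ → ℕ) : Type := (i : Fin d) → Fin (n i)

/-- `delta x y = 0` if `x = y`; otherwise `delta x y` is the largest (1-based)
index at which `x` and `y` differ. -/
def delta {d : ℕ} {n : ℕ → ℕ} (x y : Vx d n) : ℕ :=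
  (Finset.univ.filter fun i => x i ≠ y i).sup fun i => (i : ℕ) + 1

/-- The `i`-th adjacency matrix of the wreath product: `(A i) x y = 1` iff `delta x y = i`. -/
noncomputable def A (d : ℕ) (n : ℕ → ℕ) (i : ℕ) : Matrix (Vx d n) (Vx d n) ℂ :=
  Matrix.of fun x y => if delta x y = i then 1 else 0

/-- The valencies: `k 0 = 1` and, for `1 ≤ i`, `k i = n_1 ⋯ n_{i-1} (n_i - 1)`,
i.e. `k i = n 0 ⋯ n (i-2) * (n (i-1) - 1)`. -/
def k (n : ℕ → ℕ) (i : ℕ) : ℕ :=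
  if i = 0 then 1 else (∏ j ∈ Finset.range (i - 1), n j) * (n (i - 1) - 1)

/-- The dual idempotent `E_i*` with respect to the base point `x₀`: the diagonal
0-1 matrix with `(E_i*)_{yy} = 1` iff `delta x₀ y = i`. -/
noncomputable def Es {d : ℕ} {n : ℕ → ℕ} (x₀ : Vx d n) (i : ℕ) :
    Matrix (Vx d n) (Vx d n) ℂ :=
  Matrix.of fun y z => if y = z ∧ delta x₀ y = i then 1 else 0

/-- The all-ones matrix `J`. -/
noncomputable def Jm (d : ℕ) (n : ℕ → ℕ) : Matrix (Vx d n) (Vx d n) ℂ :=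
  Matrix.of fun _ _ => 1

/-- The matrices `G i j`. -/
noncomputable def G {d : ℕ} {n : ℕ → ℕ} (x₀ : Vx d n) (i j : ℕ) :
    Matrix (Vx d n) (Vx d n) ℂ :=
  if i < j then ((k n j : ℂ))⁻¹ • (Es x₀ i * A d n j * Es x₀ j)
  else if j < i then ((k n j : ℂ))⁻¹ • (Es x₀ i * A d n i * Es x₀ j)
  else ((k n i : ℂ))⁻¹ • (Es x₀ i * Jm d n * Es x₀ i)

/-- The span `U` of the matrices `G i j`, `i, j ∈ [d]`. -/
noncomputable def Uspan {d : ℕ} {n : ℕ → ℕ} (x₀ : Vx d n) :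
    Submodule ℂ (Matrix (Vx d n) (Vx d n) ℂ) :=
  Submodule.span ℂ (Set.range fun p : Fin (d + 1) × Fin (d + 1) => G x₀ p.1 p.2)

/-- The Terwilliger algebra of the wreath product with respect to `x₀`. -/
noncomputable def Ter {d : ℕ} {n : ℕ → ℕ} (x₀ : Vx d n) :
    Subalgebra ℂ (Matrix (Vx d n) (Vx d n) ℂ) :=
  Algebra.adjoin ℂ
    ((Set.range fun i : Fin (d + 1) => A d n i) ∪ (Set.range fun i : Fin (d + 1) => Es x₀ i))

/-- The matrices `F i h`, for `1 ≤ i ≤ d` and `0 ≤ h ≤ i - 1`. -/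
noncomputable def F {d : ℕ} {n : ℕ → ℕ} (x₀ : Vx d n) (i h : ℕ) :
    Matrix (Vx d n) (Vx d n) ℂ :=
  if h < i - 1 then
    (∑ j ∈ Finset.range (h + 1), (k n j : ℂ))⁻¹ •
        (∑ j ∈ Finset.range (h + 1), Es x₀ i * A d n j * Es x₀ i)
      - (∑ j ∈ Finset.range (h + 2), (k n j : ℂ))⁻¹ •
          (∑ j ∈ Finset.range (h + 2), Es x₀ i * A d n j * Es x₀ i)
  else
    (∑ j ∈ Finset.range i, (k n j : ℂ))⁻¹ •
        (∑ j ∈ Finset.range i, Es x₀ i * A d n j * Es x₀ i)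
      - G x₀ i i

/-!
The function `delta` is an ultrametric, so every triangle with two distinct side lengths is
isosceles with the two longest sides equal. The `(y, z)` entry of `E_i* A_j E_h*` is nonzero exactly
when the triangle `x₀, y, z` has sides `delta x₀ y = i`, `delta y z = j`, `delta x₀ z = h`; for
`i ≠ j` this forces `h = max i j`. Conversely, since every `n_m ≥ 2`, changing a single coordinate
produces points at any prescribed distance `≤ d`, so a triangle with sides `i` and `j` exists.
-/

section Delta

variable {d : ℕ} {n : ℕ → ℕ}

theorem delta_le_iff {x y : Vx d n} {m : ℕ} :
    delta x y ≤ m ↔ ∀ i : Fin d, x i ≠ y i → (i : ℕ) < m := by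
  simp [delta]

theorem lt_delta_of_ne {x y : Vx d n} {i : Fin d} (hne : x i ≠ y i) : (i : ℕ) < delta x y :=
  delta_le_iff.1 le_rfl i hne

theorem delta_self (x : Vx d n) : delta x x = 0 := by
  simp [delta]

theorem delta_comm (x y : Vx d n) : delta x y = delta y x := by
  simp only [delta, ne_comm]

theorem delta_triangle_max (x y z : Vx d n) : delta x z ≤ max (delta x y) (delta y z) := by
  refine delta_le_iff.2 fun i hxz => lt_max_iff.2 ?_
  by_cases hxy : x i = y i
  · exact .inr (lt_delta_of_ne (hxy ▸ hxz))
  · exact .inl (lt_delta_of_ne hxy)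

theorem delta_eq_max_of_delta_ne_delta {x y z : Vx d n} (hne : delta x y ≠ delta y z) :
    delta x z = max (delta x y) (delta y z) := by
  have hxz := delta_triangle_max x y z
  have hxy : delta x y ≤ max (delta x z) (delta y z) :=
    delta_comm z y ▸ delta_triangle_max x z y
  have hyz : delta y z ≤ max (delta x y) (delta x z) :=
    delta_comm y x ▸ delta_triangle_max y x z
  omega

theorem delta_update_of_ne (x : Vx d n) {p : Fin d} {a : Fin (n p)} (ha : a ≠ x p) :
    delta x (Function.update x p a) = p + 1 := by
  have differ_only_at_p : (univ.filter fun i => x i ≠ Function.update x p a i) = {p} := by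
    ext i
    by_cases hip : i = p
    · subst hip
      simpa using ha.symm
    · simp [hip]
  rw [delta, differ_only_at_p, sup_singleton]

theorem exists_delta_eq (hn : ∀ i < d, 2 ≤ n i) (x : Vx d n) {m : ℕ} (hm : m ≤ d) :
    ∃ y, delta x y = m := by
  cases m with
  | zero => exact ⟨x, delta_self x⟩
  | succ p =>
    have : Nontrivial (Fin (n p)) := Fin.nontrivial_iff_two_le.2 (hn p hm)
    obtain ⟨a, ha⟩ := exists_ne (x ⟨p, hm⟩)
    exact ⟨_, delta_update_of_ne x ha⟩

end Delta

section Entries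

variable {d : ℕ} {n : ℕ → ℕ} (x₀ : Vx d n)

theorem Es_eq_diagonal (i : ℕ) :
    Es x₀ i = diagonal fun y => if delta x₀ y = i then 1 else 0 := by
  ext y z
  simp only [Es, of_apply, diagonal_apply, ite_and]

theorem Es_mul_mul_Es_apply (M : Matrix (Vx d n) (Vx d n) ℂ) (i h : ℕ) (y z : Vx d n) :
    (Es x₀ i * M * Es x₀ h) y z = if delta x₀ y = i ∧ delta x₀ z = h then M y z else 0 := by
  rw [Es_eq_diagonal, Es_eq_diagonal, mul_diagonal, diagonal_mul, ite_and]
  simp only [ite_mul, one_mul, zero_mul, mul_ite, mul_one, mul_zero]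
  split_ifs <;> rfl

theorem Es_mul_A_mul_Es_ne_zero_iff (i j h : ℕ) :
    Es x₀ i * A d n j * Es x₀ h ≠ 0 ↔
      ∃ y z, delta x₀ y = i ∧ delta y z = j ∧ delta x₀ z = h := by
  simp only [ne_eq, ← Matrix.ext_iff, Es_mul_mul_Es_apply, A, of_apply, Matrix.zero_apply,
    not_forall, ite_eq_right_iff, one_ne_zero, imp_false, not_not, exists_prop, and_assoc, and_comm]

end Entries

/-- for `i ≠ j`, `E_i* A_j E_h* ≠ 0` iff `h = max i j`. -/
theorem stmt11 (d : ℕ) (hd : 1 ≤ d) (n : ℕ → ℕ) (hn : ∀ i < d, 2 ≤ n i)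
    (x₀ : Vx d n) (i j h : ℕ) (hi : i ≤ d) (hj : j ≤ d) (hh : h ≤ d) (hij : i ≠ j) :
    Es x₀ i * A d n j * Es x₀ h ≠ 0 ↔ h = max i j := by
  rw [Es_mul_A_mul_Es_ne_zero_iff]
  constructor
  · rintro ⟨y, z, rfl, rfl, rfl⟩
    exact delta_eq_max_of_delta_ne_delta hij
  · rintro rfl
    obtain ⟨y, rfl⟩ := exists_delta_eq hn x₀ hi
    obtain ⟨z, rfl⟩ := exists_delta_eq hn y hj
    exact ⟨y, z, rfl, rfl, delta_eq_max_of_delta_ne_delta hij⟩
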